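/- arXiv:1804.11033 — 3 statements merged into one kernel-verified Lean document; each statement's English description precedes it below -/
import Mathlib

section
/- Let p = (f₁ ≤ … ≤ f_N) be a vertex pattern with N ≥ 3, each fᵢ ≥ 3, and positive combinatorial curvature 1 − N/2 + Σᵢ 1/fᵢ > 0. Then the set {a ∈ [0, 2π/f_N] : K_a(p) ≥ 0} has a maximum a_c(p) > 0. Moreover: if K_{2π/f_N}(p) > 0 then a_c(p) = 2π/f_N; and if K_{2π/f_N}(p) ≤ 0 then there is a unique a ∈ (0, 2π/f_N] with K_a(p) = 0, and a_c(p) equals this unique solution. -/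
/-!
Each interior angle of a spherical regular polygon grows strictly and continuously with its side
length, so the angle defect decreases strictly and continuously on `[0, 2π/f_N]`. In the
limit of side length zero the polygons become Euclidean, and the defect there is `2π` times the
combinatorial curvature, hence positive. So the defect either stays positive up to `2π/f_N` or, by
the intermediate value theorem, vanishes exactly once, and it is nonnegative precisely up to that
zero.
-/

open Set Real

theorem isGreatest_superlevel_of_strictAntiOn {α β : Type*} [LinearOrder α] [Preorder β]
    {g : α → β} {s : Set α} {c : α} (hg : StrictAntiOn g s) (hc : c ∈ s) :
    IsGreatest {x | x ∈ s ∧ g c ≤ g x} c :=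
  ⟨⟨hc, le_rfl⟩, fun _ hx => le_of_not_gt fun hlt => (hg hc hx.1 hlt).not_ge hx.2⟩

theorem exists_isGreatest_superlevel_of_strictAntiOn {α β : Type*}
    [ConditionallyCompleteLinearOrder α] [TopologicalSpace α] [OrderTopology α] [DenselyOrdered α]
    [LinearOrder β] [TopologicalSpace β] [OrderClosedTopology β]
    {g : α → β} {a b : α} {y : β} (hab : a < b) (hcont : ContinuousOn g (Icc a b))
    (hanti : StrictAntiOn g (Icc a b)) (ha : y < g a) :
    ∃ c, IsGreatest {x | x ∈ Icc a b ∧ y ≤ g x} c ∧ a < c ∧ (y < g b → c = b) ∧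
      (g b ≤ y → c ∈ Ioc a b ∧ g c = y ∧ ∀ x ∈ Ioc a b, g x = y → x = c) := by
  rcases lt_or_ge y (g b) with hb | hb
  · exact ⟨b, ⟨⟨right_mem_Icc.2 hab.le, hb.le⟩, fun x hx => hx.1.2⟩, hab, fun _ => rfl,
      fun h => absurd h hb.not_ge⟩
  · obtain ⟨c, hc, rfl⟩ := intermediate_value_Icc' hab.le hcont ⟨hb, ha.le⟩
    have hac : a < c := hc.1.lt_of_ne fun h => ha.ne' (congrArg g h)
    exact ⟨c, isGreatest_superlevel_of_strictAntiOn hanti hc, hac, fun h => absurd hb h.not_ge,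
      fun _ => ⟨⟨hac, hc.2⟩, rfl, fun x hx h => hanti.injOn (Ioc_subset_Icc_self hx) hc h⟩⟩

/-- The interior angle of the regular `f`-gon of side length `a` on the unit sphere, or of the
Euclidean regular `f`-gon when `a = 0`. The centre, a vertex and the midpoint of an adjacent side
form a right triangle with angle `π / f` at the centre and leg `a / 2` opposite to it, whence
`cos (π / f) = cos (a / 2) * sin (angle / 2)`. The number of sides may be any real; the formula is
geometrically meaningful for `2 < f` and `0 ≤ a ≤ 2 * π / f`. -/
noncomputable def polygonAngle (f a : ℝ) : ℝ := 2 * arcsin (cos (π / f) / cos (a / 2))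

section PolygonAngle

variable {f a : ℝ}

theorem pi_div_lt_pi_div_two (hf : 2 < f) : π / f < π / 2 :=
  div_lt_div_of_pos_left pi_pos two_pos hf

theorem half_mem_Icc_of_mem_Icc (ha : a ∈ Icc 0 (2 * π / f)) : a / 2 ∈ Icc 0 (π / f) := by
  have h : 2 * π / f = 2 * (π / f) := mul_div_assoc 2 π f
  constructor <;> linarith [ha.1, ha.2]

theorem cos_pi_div_pos (hf : 2 < f) : 0 < cos (π / f) := by
  have hpos : 0 < π / f := div_pos pi_pos (two_pos.trans hf)
  exact cos_pos_of_mem_Ioo ⟨by linarith [pi_pos], pi_div_lt_pi_div_two hf⟩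

theorem cos_pi_div_le_cos_half (hf : 2 < f) (ha : a ∈ Icc 0 (2 * π / f)) :
    cos (π / f) ≤ cos (a / 2) := by
  obtain ⟨h0, hle⟩ := half_mem_Icc_of_mem_Icc ha
  exact cos_le_cos_of_nonneg_of_le_pi h0 (by linarith [pi_div_lt_pi_div_two hf, pi_pos]) hle

theorem cos_half_pos (hf : 2 < f) (ha : a ∈ Icc 0 (2 * π / f)) : 0 < cos (a / 2) :=
  (cos_pi_div_pos hf).trans_le (cos_pi_div_le_cos_half hf ha)

theorem continuousOn_polygonAngle (hf : 2 < f) :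
    ContinuousOn (polygonAngle f) (Icc 0 (2 * π / f)) := by
  have hratio : ContinuousOn (fun a => cos (π / f) / cos (a / 2)) (Icc 0 (2 * π / f)) :=
    continuousOn_const.div (by fun_prop) fun a ha => (cos_half_pos hf ha).ne'
  exact continuousOn_const.mul (continuous_arcsin.comp_continuousOn hratio)

theorem strictMonoOn_polygonAngle (hf : 2 < f) :
    StrictMonoOn (polygonAngle f) (Icc 0 (2 * π / f)) := by
  intro a ha b hb hab
  have hcos : cos (b / 2) < cos (a / 2) := by
    refine cos_lt_cos_of_nonneg_of_le_pi (half_mem_Icc_of_mem_Icc ha).1 ?_ (by linarith)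
    linarith [(half_mem_Icc_of_mem_Icc hb).2, pi_div_lt_pi_div_two hf, pi_pos]
  have hratio : cos (π / f) / cos (a / 2) < cos (π / f) / cos (b / 2) :=
    div_lt_div_of_pos_left (cos_pi_div_pos hf) (cos_half_pos hf hb) hcos
  have hpos : 0 < cos (π / f) / cos (a / 2) := div_pos (cos_pi_div_pos hf) (cos_half_pos hf ha)
  have hle : cos (π / f) / cos (b / 2) ≤ 1 :=
    (div_le_one (cos_half_pos hf hb)).2 (cos_pi_div_le_cos_half hf hb)
  exact mul_lt_mul_of_pos_left (arcsin_lt_arcsin (by linarith) hratio hle) two_pos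

theorem polygonAngle_zero (hf : 1 ≤ f) : polygonAngle f 0 = π - 2 * π * (1 / f) := by
  have hpos : 0 < π / f := div_pos pi_pos (one_pos.trans_le hf)
  have hle : π / f ≤ π := div_le_self pi_pos.le hf
  rw [polygonAngle, zero_div, cos_zero, div_one, ← sin_pi_div_two_sub,
    arcsin_sin (by linarith) (by linarith)]
  ring

end PolygonAngle

section AngleDefect

variable {ι : Type*} [Fintype ι]

/-- The angle defect `K_a(p)` at a vertex surrounded by spherical regular polygons of common side
length `a`, the `i`-th of which has `f i` sides. Since the order of the polygons does not affect
the defect, the vertex pattern is encoded as an arbitrary finite family. -/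
noncomputable def angleDefect (f : ι → ℝ) (a : ℝ) : ℝ := 2 * π - ∑ i, polygonAngle (f i) a

variable {f : ι → ℝ} {L : ℝ}

theorem continuousOn_angleDefect (hf : ∀ i, 2 < f i) (hL : ∀ i, L ≤ 2 * π / f i) :
    ContinuousOn (angleDefect f) (Icc 0 L) :=
  continuousOn_const.sub <| continuousOn_finsetSum _ fun i _ =>
    (continuousOn_polygonAngle (hf i)).mono (Icc_subset_Icc_right (hL i))

theorem strictAntiOn_angleDefect [Nonempty ι] (hf : ∀ i, 2 < f i) (hL : ∀ i, L ≤ 2 * π / f i) :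
    StrictAntiOn (angleDefect f) (Icc 0 L) := by
  intro a ha b hb hab
  refine sub_lt_sub_left (Finset.sum_lt_sum_of_nonempty Finset.univ_nonempty fun i _ => ?_) _
  have hsub : Icc 0 L ⊆ Icc 0 (2 * π / f i) := Icc_subset_Icc_right (hL i)
  exact strictMonoOn_polygonAngle (hf i) (hsub ha) (hsub hb) hab

theorem angleDefect_zero (hf : ∀ i, 1 ≤ f i) :
    angleDefect f 0 = 2 * π * (1 - (Fintype.card ι : ℝ) / 2 + ∑ i, 1 / f i) := by
  calc angleDefect f 0 = 2 * π - ∑ i, (π - 2 * π * (1 / f i)) :=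
        congrArg (2 * π - ·) (Finset.sum_congr rfl fun i _ => polygonAngle_zero (hf i))
    _ = 2 * π - (Fintype.card ι * π - 2 * π * ∑ i, 1 / f i) := by
        rw [Finset.sum_sub_distrib, ← Finset.mul_sum, Finset.sum_const, Finset.card_univ,
          nsmul_eq_mul]
    _ = 2 * π * (1 - (Fintype.card ι : ℝ) / 2 + ∑ i, 1 / f i) := by ring

theorem stmt3_general (hf : ∀ i, 2 < f i) {m : ι} (hm : ∀ i, f i ≤ f m)
    (hcurv : 0 < 1 - (Fintype.card ι : ℝ) / 2 + ∑ i, 1 / f i) :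
    ∃ ac : ℝ, IsGreatest {a : ℝ | a ∈ Icc 0 (2 * π / f m) ∧ 0 ≤ angleDefect f a} ac ∧ 0 < ac ∧
      (0 < angleDefect f (2 * π / f m) → ac = 2 * π / f m) ∧
      (angleDefect f (2 * π / f m) ≤ 0 → ac ∈ Ioc 0 (2 * π / f m) ∧ angleDefect f ac = 0 ∧
        ∀ a ∈ Ioc 0 (2 * π / f m), angleDefect f a = 0 → a = ac) := by
  have : Nonempty ι := ⟨m⟩
  have hpos (i : ι) : 0 < f i := two_pos.trans (hf i)
  have hL (i : ι) : 2 * π / f m ≤ 2 * π / f i :=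
    div_le_div_of_nonneg_left two_pi_pos.le (hpos i) (hm i)
  have hdefect_zero : 0 < angleDefect f 0 := by
    rw [angleDefect_zero fun i => one_le_two.trans (hf i).le]
    exact mul_pos two_pi_pos hcurv
  exact exists_isGreatest_superlevel_of_strictAntiOn (div_pos two_pi_pos (hpos m))
    (continuousOn_angleDefect hf hL) (strictAntiOn_angleDefect hf hL) hdefect_zero

end AngleDefect

/-- Let `p = (f₁ ≤ … ≤ f_N)` be a vertex pattern with `N ≥ 3`, each `fᵢ ≥ 3`, and
positive combinatorial curvature `1 − N/2 + Σᵢ 1/fᵢ > 0`.  Then the set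
`{a ∈ [0, 2π/f_N] : K_a(p) ≥ 0}` has a maximum `a_c(p) > 0`.  Moreover: if
`K_{2π/f_N}(p) > 0` then `a_c(p) = 2π/f_N`; and if `K_{2π/f_N}(p) ≤ 0` then there is
a unique `a ∈ (0, 2π/f_N]` with `K_a(p) = 0`, and `a_c(p)` equals this solution. -/
theorem stmt3 (N : ℕ) (hN : 3 ≤ N) (f : Fin N → ℕ) (hmono : Monotone f)
    (h3 : ∀ i, 3 ≤ f i)
    (hcurv : 0 < 1 - (N : ℝ) / 2 + ∑ i, (1 : ℝ) / (f i : ℝ))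
    (L : ℝ) (hL : L = 2 * Real.pi / (f ⟨N - 1, by omega⟩ : ℝ))
    (K : ℝ → ℝ)
    (hK : ∀ a, K a = 2 * Real.pi -
      ∑ i, 2 * Real.arcsin (Real.cos (Real.pi / (f i : ℝ)) / Real.cos (a / 2))) :
    ∃ ac : ℝ, IsGreatest {a : ℝ | a ∈ Set.Icc 0 L ∧ 0 ≤ K a} ac ∧ 0 < ac ∧
      (0 < K L → ac = L) ∧
      (K L ≤ 0 →
        ac ∈ Set.Ioc 0 L ∧ K ac = 0 ∧ ∀ a ∈ Set.Ioc (0:ℝ) L, K a = 0 → a = ac) := by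
  obtain rfl : K = angleDefect fun i => (f i : ℝ) := funext hK
  subst hL
  exact stmt3_general (f := fun i => (f i : ℝ)) (fun i => by exact_mod_cast h3 i)
    (fun i => by exact_mod_cast hmono (Fin.le_def.2 (Nat.le_sub_one_of_lt i.2)))
    (by simpa only [Fintype.card_fin] using hcurv)
end

section
/- Let f₁ ≤ f₂ ≤ … ≤ f_N be integers with N ≥ 3 and each fᵢ ≥ 3. Then 1 − N/2 + Σᵢ 1/fᵢ > 0 if and only if there exists a ∈ (0, 2π/f_N] such that Σ_{i=1}^N 2·arcsin(cos(π/fᵢ)/cos(a/2)) ≤ 2π. -/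
/-! At side length `0` the faces are Euclidean, and the total angle is `2π (1 - Φ)` where `Φ` is the
combinatorial curvature; so `Φ > 0` means that the total angle at side length `0` is less than `2π`.
Since the total angle is continuous and strictly increasing in the side length, this happens exactly
when it is still at most `2π` at some positive side length. -/

open Real Set

/-- The angle of the regular spherical polygon with `n` sides of length `a` in the unit sphere. The
number of sides is a real parameter, which allows star polygons such as `n = 5 / 2`. The formula has
this meaning for `2 < n` and `0 < a ≤ 2π / n`; its value at `a = 0` is the Euclidean angle. -/
noncomputable def sphericalAngle (a n : ℝ) : ℝ :=
  2 * arcsin (cos (π / n) / cos (a / 2))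

theorem sphericalAngle_zero_left {n : ℝ} (hn : 1 ≤ n) : sphericalAngle 0 n = π - 2 * π / n := by
  have hpos : 0 ≤ π / n := by positivity
  have hle : π / n ≤ π := div_le_self pi_pos.le hn
  have harcsin : arcsin (cos (π / n)) = π / 2 - π / n := by
    rw [← sin_pi_div_two_sub, arcsin_sin (by linarith) (by linarith)]
  rw [sphericalAngle, zero_div, cos_zero, div_one, harcsin]
  ring

theorem continuousAt_sphericalAngle {a : ℝ} (ha : cos (a / 2) ≠ 0) (n : ℝ) :
    ContinuousAt (sphericalAngle · n) a := by
  have hquot : ContinuousAt (fun b : ℝ => cos (π / n) / cos (b / 2)) a :=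
    continuousAt_const.div (by fun_prop) ha
  exact continuousAt_const.mul (continuous_arcsin.continuousAt.comp hquot)

theorem strictMonoOn_sphericalAngle {n : ℝ} (hn : 2 < n) :
    StrictMonoOn (sphericalAngle · n) (Icc 0 (2 * π / n)) := by
  rintro a ⟨ha, -⟩ b ⟨-, hb⟩ hab
  have hn_half : π / n < π / 2 := div_lt_div_of_pos_left pi_pos two_pos hn
  have hb_half : b / 2 ≤ π / n := by linarith [mul_div_assoc 2 π n]
  have hcos_n : 0 < cos (π / n) := cos_pos_of_mem_Ioo ⟨by linarith, hn_half⟩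
  have hcos_b : cos (π / n) ≤ cos (b / 2) :=
    cos_le_cos_of_nonneg_of_le_pi (by linarith) (by linarith) hb_half
  have hcos_ab : cos (b / 2) < cos (a / 2) :=
    cos_lt_cos_of_nonneg_of_le_pi (by linarith) (by linarith) (by linarith)
  have hb_pos : 0 < cos (b / 2) := hcos_n.trans_le hcos_b
  have ha_pos : 0 < cos (a / 2) := hb_pos.trans hcos_ab
  have harcsin : arcsin (cos (π / n) / cos (a / 2)) < arcsin (cos (π / n) / cos (b / 2)) :=
    arcsin_lt_arcsin (neg_one_lt_zero.le.trans (by positivity))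
      (div_lt_div_of_pos_left hcos_n hb_pos hcos_ab) ((div_le_one hb_pos).2 hcos_b)
  exact mul_lt_mul_of_pos_left harcsin two_pos

section Vertex

variable {ι : Type*} [Fintype ι]

/-- The combinatorial curvature of a vertex whose incident faces have degrees `f`. -/
noncomputable def combinatorialCurvature (f : ι → ℝ) : ℝ :=
  1 - (Fintype.card ι : ℝ) / 2 + ∑ i, 1 / f i

/-- The total angle at a vertex whose incident faces are regular spherical polygons of degrees `f`
and side length `a`. -/
noncomputable def totalAngle (a : ℝ) (f : ι → ℝ) : ℝ :=
  ∑ i, sphericalAngle a (f i)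

theorem totalAngle_zero_left {f : ι → ℝ} (hf : ∀ i, 1 ≤ f i) :
    totalAngle 0 f = 2 * π * (1 - combinatorialCurvature f) := by
  calc totalAngle 0 f = ∑ i, (π - 2 * π * (1 / f i)) :=
        Finset.sum_congr rfl fun i _ => by rw [sphericalAngle_zero_left (hf i), mul_one_div]
    _ = Fintype.card ι * π - 2 * π * ∑ i, 1 / f i := by
        rw [Finset.sum_sub_distrib, ← Finset.mul_sum, Finset.sum_const, Finset.card_univ,
          nsmul_eq_mul]
    _ = 2 * π * (1 - combinatorialCurvature f) := by
        rw [combinatorialCurvature]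
        ring

theorem totalAngle_zero_left_lt_two_pi_iff {f : ι → ℝ} (hf : ∀ i, 1 ≤ f i) :
    totalAngle 0 f < 2 * π ↔ 0 < combinatorialCurvature f := by
  rw [totalAngle_zero_left hf, mul_lt_iff_lt_one_right two_pi_pos, sub_lt_self_iff]

theorem continuousAt_totalAngle {a : ℝ} (ha : cos (a / 2) ≠ 0) (f : ι → ℝ) :
    ContinuousAt (totalAngle · f) a :=
  tendsto_finsetSum _ fun i _ => continuousAt_sphericalAngle ha (f i)

theorem strictMonoOn_totalAngle [Nonempty ι] {f : ι → ℝ} (hf : ∀ i, 2 < f i) {m : ℝ}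
    (hm : ∀ i, f i ≤ m) : StrictMonoOn (totalAngle · f) (Icc 0 (2 * π / m)) := by
  intro a ha b hb hab
  have hsub (i : ι) : Icc 0 (2 * π / m) ⊆ Icc 0 (2 * π / f i) :=
    Icc_subset_Icc_right <|
      div_le_div_of_nonneg_left two_pi_pos.le (two_pos.trans (hf i)) (hm i)
  exact Finset.sum_lt_sum_of_nonempty Finset.univ_nonempty fun i _ =>
    strictMonoOn_sphericalAngle (hf i) (hsub i ha) (hsub i hb) hab

theorem stmt15_general [Nonempty ι] {f : ι → ℝ} (hf : ∀ i, 2 < f i) {m : ℝ}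
    (hm : ∀ i, f i ≤ m) :
    0 < combinatorialCurvature f ↔ ∃ a ∈ Ioc 0 (2 * π / m), totalAngle a f ≤ 2 * π := by
  have hm_pos : 0 < m := (two_pos.trans (hf (Classical.arbitrary ι))).trans_le (hm _)
  have hbound : 0 < 2 * π / m := div_pos two_pi_pos hm_pos
  rw [← totalAngle_zero_left_lt_two_pi_iff fun i => one_le_two.trans (hf i).le]
  constructor
  · intro hlt
    have hcont : ContinuousAt (totalAngle · f) 0 := continuousAt_totalAngle (by simp) f
    have hnear : ∀ᶠ a in nhdsWithin 0 (Ioi 0), totalAngle a f < 2 * π :=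
      (hcont.eventually_lt_const hlt).filter_mono nhdsWithin_le_nhds
    obtain ⟨a, hlt_a, ha⟩ := (hnear.and (Ioc_mem_nhdsGT hbound)).exists
    exact ⟨a, ha, hlt_a.le⟩
  · rintro ⟨a, ha, hle⟩
    exact (strictMonoOn_totalAngle hf hm (left_mem_Icc.2 hbound.le) (Ioc_subset_Icc_self ha)
      ha.1).trans_le hle

end Vertex

/-- Let `f₁ ≤ … ≤ f_N` be integers with `N ≥ 3` and each `fᵢ ≥ 3`.  Then the
combinatorial curvature `1 − N/2 + Σᵢ 1/fᵢ` is positive iff there exists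
`a ∈ (0, 2π/f_N]` such that the total angle
`Σᵢ 2·arcsin(cos(π/fᵢ)/cos(a/2))` is at most `2π`. -/
theorem stmt15 (N : ℕ) (hN : 3 ≤ N) (f : Fin N → ℕ) (hmono : Monotone f)
    (h3 : ∀ i, 3 ≤ f i) :
    (0 < 1 - (N : ℝ) / 2 + ∑ i, (1 : ℝ) / (f i : ℝ)) ↔
      ∃ a ∈ Set.Ioc (0:ℝ) (2 * Real.pi / (f ⟨N - 1, by omega⟩ : ℝ)),
        ∑ i, 2 * Real.arcsin (Real.cos (Real.pi / (f i : ℝ)) / Real.cos (a / 2))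
          ≤ 2 * Real.pi := by
  have : Nonempty (Fin N) := ⟨⟨0, by omega⟩⟩
  have hle_last (i : Fin N) : f i ≤ f ⟨N - 1, by omega⟩ := hmono (Nat.le_sub_one_of_lt i.isLt)
  simpa only [combinatorialCurvature, totalAngle, sphericalAngle, Fintype.card_fin] using
    stmt15_general (f := fun i => (f i : ℝ)) (fun i => by exact_mod_cast h3 i)
      (fun i => Nat.cast_le.2 (hle_last i))
end

section
/- Fix an integer n ≥ 3 and set φ = arctan((1/2)·√(2 − 4·cos²(π/n) + 2·cos(π/n))). For i = 0, 1, …, 2n−1 define the unit vector Pᵢ = (sin θᵢ · cos(iπ/n), sin θᵢ · sin(iπ/n), cos θᵢ) ∈ ℝ³, where θᵢ = π/2 + (−1)ⁱ·φ. Then for all i (indices mod 2n) the Euclidean inner products satisfy ⟨Pᵢ, P_{i+1}⟩ = ⟨Pᵢ, P_{i+2}⟩; that is, the spherical distance from Pᵢ to P_{i+1} equals the spherical distance from Pᵢ to P_{i+2}, so the vertices of the n-gonal antiprism inscribed in the unit sphere span equilateral spherical triangles and two regular spherical n-gons. -/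
/-!
With `φ` the latitude and `α` the longitude step, the spherical law of cosines gives
`⟨Pᵢ, Pᵢ₊ₖ⟩ = cos² φ cos (kα) + (-1)ᵏ sin² φ`, which does not depend on `i`. Equating the values at
`k = 1` and `k = 2` and dividing by `cos² φ` leaves `2 tan² φ = (1 - cos α) (1 + 2 cos α)`; the
right-hand side is nonnegative exactly when `cos α ≥ -1/2`, and then the square root defining `φ`
solves the equation.
-/

open Real
open scoped RealInnerProductSpace

/-- The point of the unit sphere in `ℝ³` with spherical coordinates `θ` (colatitude, measured from
the north pole) and `l` (longitude). -/
noncomputable def sphericalPoint (θ l : ℝ) : EuclideanSpace ℝ (Fin 3) :=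
  !₂[sin θ * cos l, sin θ * sin l, cos θ]

theorem inner_sphericalPoint (θ₁ l₁ θ₂ l₂ : ℝ) :
    ⟪sphericalPoint θ₁ l₁, sphericalPoint θ₂ l₂⟫ =
      sin θ₁ * sin θ₂ * cos (l₂ - l₁) + cos θ₁ * cos θ₂ := by
  simp only [sphericalPoint, PiLp.inner_apply, Fin.sum_univ_three, RCLike.inner_apply, conj_trivial,
    Matrix.cons_val, cos_sub]
  ring

/-- The vertices of an antiprism inscribed in the unit sphere: successive vertices differ by `α` in
longitude and lie alternately on the parallels of latitude `-φ` (even `i`) and `φ` (odd `i`).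
The `n`-gonal antiprism is the case `α = π / n`, and the indices are integers, so that the sequence
is then `2 * n`-periodic. -/
noncomputable def antiprismVertex (α φ : ℝ) (i : ℤ) : EuclideanSpace ℝ (Fin 3) :=
  sphericalPoint (π / 2 + (-1) ^ i * φ) (i * α)

theorem cos_neg_one_zpow_mul (i : ℤ) (x : ℝ) : cos ((-1) ^ i * x) = cos x := by
  rcases i.even_or_odd with hi | hi <;> simp [hi.neg_one_zpow]

theorem sin_neg_one_zpow_mul (i : ℤ) (x : ℝ) : sin ((-1) ^ i * x) = (-1) ^ i * sin x := by
  rcases i.even_or_odd with hi | hi <;> simp [hi.neg_one_zpow]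

theorem inner_antiprismVertex_add (α φ : ℝ) (i k : ℤ) :
    ⟪antiprismVertex α φ i, antiprismVertex α φ (i + k)⟫ =
      cos φ ^ 2 * cos (k * α) + (-1) ^ k * sin φ ^ 2 := by
  have hlongitude : ((i + k : ℤ) : ℝ) * α - i * α = k * α := by push_cast; ring
  have hsign : (-1 : ℝ) ^ i * (-1) ^ (i + k) = (-1) ^ k := by
    rw [zpow_add₀ (by norm_num), ← mul_assoc, ← mul_zpow]
    norm_num
  rw [antiprismVertex, antiprismVertex, inner_sphericalPoint, hlongitude, ← hsign]
  simp only [add_comm (π / 2), sin_add_pi_div_two, cos_add_pi_div_two, cos_neg_one_zpow_mul,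
    sin_neg_one_zpow_mul]
  ring

theorem inner_antiprismVertex_self (α φ : ℝ) (i : ℤ) :
    ⟪antiprismVertex α φ i, antiprismVertex α φ i⟫ = 1 := by
  simpa using inner_antiprismVertex_add α φ i 0

theorem inner_antiprismVertex_add_one_eq_add_two_iff {φ : ℝ} (hφ : cos φ ≠ 0) (α : ℝ) (i : ℤ) :
    ⟪antiprismVertex α φ i, antiprismVertex α φ (i + 1)⟫ =
        ⟪antiprismVertex α φ i, antiprismVertex α φ (i + 2)⟫ ↔
      2 * tan φ ^ 2 = (1 - cos α) * (1 + 2 * cos α) := by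
  have hsin : sin φ = tan φ * cos φ := (tan_mul_cos hφ).symm
  have hfactor :
      ⟪antiprismVertex α φ i, antiprismVertex α φ (i + 2)⟫ -
          ⟪antiprismVertex α φ i, antiprismVertex α φ (i + 1)⟫ =
        cos φ ^ 2 * (2 * tan φ ^ 2 - (1 - cos α) * (1 + 2 * cos α)) := by
    rw [inner_antiprismVertex_add, inner_antiprismVertex_add, hsin]
    norm_num [cos_two_mul]
    ring
  rw [eq_comm, ← sub_eq_zero, hfactor, mul_eq_zero_iff_left (pow_ne_zero 2 hφ), sub_eq_zero]

/-- The latitude `φ` at which `antiprismVertex α φ` has equilateral lateral triangles. It is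
meaningful only where the radicand is nonnegative; elsewhere the square root, and with it the
latitude, is `0`. -/
noncomputable def antiprismLatitude (α : ℝ) : ℝ :=
  arctan (1 / 2 * √(2 - 4 * cos α ^ 2 + 2 * cos α))

theorem two_mul_tan_antiprismLatitude_sq {α : ℝ} (hα : -1 / 2 ≤ cos α) :
    2 * tan (antiprismLatitude α) ^ 2 = (1 - cos α) * (1 + 2 * cos α) := by
  have hfactor : 2 - 4 * cos α ^ 2 + 2 * cos α = 2 * ((1 - cos α) * (1 + 2 * cos α)) := by ring
  have hradicand : 0 ≤ 2 * ((1 - cos α) * (1 + 2 * cos α)) :=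
    mul_nonneg zero_le_two (mul_nonneg (sub_nonneg.2 (cos_le_one α)) (by linarith))
  rw [antiprismLatitude, tan_arctan, hfactor, mul_pow, sq_sqrt hradicand]
  ring

theorem inner_antiprismVertex_add_one_eq_add_two {α : ℝ} (hα : -1 / 2 ≤ cos α) (i : ℤ) :
    ⟪antiprismVertex α (antiprismLatitude α) i,
        antiprismVertex α (antiprismLatitude α) (i + 1)⟫ =
      ⟪antiprismVertex α (antiprismLatitude α) i,
        antiprismVertex α (antiprismLatitude α) (i + 2)⟫ :=
  (inner_antiprismVertex_add_one_eq_add_two_iff (cos_arctan_pos _).ne' α i).2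
    (two_mul_tan_antiprismLatitude_sq hα)

theorem cos_pi_div_nonneg {x : ℝ} (hx : 2 ≤ x) : 0 ≤ cos (π / x) :=
  cos_nonneg_of_neg_pi_div_two_le_of_le
    ((neg_nonpos.2 pi_div_two_pos.le).trans (by positivity))
    (div_le_div_of_nonneg_left pi_pos.le two_pos hx)

-- Besides `α = π / n`, the angles `α = π * q / p` with `q / p < 2 / 3` give the star antiprisms.
theorem stmt16_general (α : ℝ) (hα : -1 / 2 ≤ cos α) (φ : ℝ)
    (hφ : φ = arctan (1 / 2 * √(2 - 4 * cos α ^ 2 + 2 * cos α)))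
    (θ : ℤ → ℝ) (hθ : ∀ i, θ i = π / 2 + (-1 : ℝ) ^ i * φ)
    (P : ℤ → ℝ × ℝ × ℝ)
    (hP : ∀ i, P i = (sin (θ i) * cos (i * α), sin (θ i) * sin (i * α), cos (θ i)))
    (dot : ℝ × ℝ × ℝ → ℝ × ℝ × ℝ → ℝ)
    (hdot : ∀ u v, dot u v = u.1 * v.1 + u.2.1 * v.2.1 + u.2.2 * v.2.2) (i : ℤ) :
    dot (P i) (P i) = 1 ∧
      dot (P i) (P (i + 1)) = dot (P i) (P (i + 2)) ∧
      arccos (dot (P i) (P (i + 1))) = arccos (dot (P i) (P (i + 2))) := by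
  obtain rfl : φ = antiprismLatitude α := hφ
  have hinner (j k : ℤ) : dot (P j) (P k) =
      ⟪antiprismVertex α (antiprismLatitude α) j, antiprismVertex α (antiprismLatitude α) k⟫ := by
    rw [hdot, hP, hP, antiprismVertex, antiprismVertex, ← hθ, ← hθ, inner_sphericalPoint, cos_sub]
    ring
  have hdist : dot (P i) (P (i + 1)) = dot (P i) (P (i + 2)) := by
    rw [hinner, hinner, inner_antiprismVertex_add_one_eq_add_two hα]
  exact ⟨(hinner i i).trans (inner_antiprismVertex_self _ _ i), hdist, congrArg arccos hdist⟩

/-- Fix `n ≥ 3` and set `φ = arctan((1/2)·√(2 − 4cos²(π/n) + 2cos(π/n)))`.  For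
`i ∈ ℤ` let `Pᵢ ∈ ℝ³` be the unit vector at colatitude `θᵢ = π/2 + (−1)ⁱφ` and
longitude `iπ/n`.  Then each `Pᵢ` is a unit vector and for all `i` the Euclidean
inner products satisfy `⟨Pᵢ, P_{i+1}⟩ = ⟨Pᵢ, P_{i+2}⟩`, i.e. the spherical distance
from `Pᵢ` to `P_{i+1}` equals that from `Pᵢ` to `P_{i+2}` (the vertices of the
`n`-gonal antiprism inscribed in the unit sphere span equilateral spherical
triangles and two regular spherical `n`-gons). -/
theorem stmt16 (n : ℕ) (hn : 3 ≤ n) (φ : ℝ)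
    (hφ : φ = Real.arctan ((1 / 2) *
      Real.sqrt (2 - 4 * Real.cos (Real.pi / (n : ℝ)) ^ 2 + 2 * Real.cos (Real.pi / (n : ℝ)))))
    (θ : ℤ → ℝ) (hθ : ∀ i, θ i = Real.pi / 2 + (-1 : ℝ) ^ i * φ)
    (P : ℤ → ℝ × ℝ × ℝ)
    (hP : ∀ i, P i = (Real.sin (θ i) * Real.cos ((i : ℝ) * Real.pi / (n : ℝ)),
                      Real.sin (θ i) * Real.sin ((i : ℝ) * Real.pi / (n : ℝ)),
                      Real.cos (θ i)))
    (dot : ℝ × ℝ × ℝ → ℝ × ℝ × ℝ → ℝ)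
    (hdot : ∀ u v, dot u v = u.1 * v.1 + u.2.1 * v.2.1 + u.2.2 * v.2.2) :
    ∀ i : ℤ, dot (P i) (P i) = 1 ∧
      dot (P i) (P (i + 1)) = dot (P i) (P (i + 2)) ∧
      Real.arccos (dot (P i) (P (i + 1))) = Real.arccos (dot (P i) (P (i + 2))) := by
  have hcos : 0 ≤ Real.cos (Real.pi / n) := cos_pi_div_nonneg (by norm_cast; lia)
  exact stmt16_general (Real.pi / n) (by linarith) φ hφ θ hθ P
    (by simpa only [mul_div_assoc] using hP) dot hdot
end
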